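/- Let s ≥ 6 and d be positive integers, a_1 = 0, a_2, ..., a_s integers with gcd of the nonzero a_i equal to 1, and B_1, ..., B_s nonempty subsets of Z/dZ with 0 ∈ B_1. Let B~ = ∪_{i=1}^s ({a_i} × B_i) ⊆ Z × Z/dZ. If |B~ + B~| < 2.5 |B~|, then max_i a_i < 1.5 s. -/

import Mathlib

open Pointwise

/-!
Let `A` be the set of the `a i`, with `|A| ≥ 6`, and suppose `l = max A - min A ≥ 3/2 |A|`. Reducing
modulo `l`, where `min A` and `max A` coincide, every fibre of `A + X` over `ZMod l` contains
`{0, l} + x` as soon as it lies over some `x ∈ X`. Together with Kneser's theorem in `ZMod l` this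
gives the Lev–Smeliansky type bound `|A + X| ≥ min (l + |X|) (|A| + 2|X| - 3) ≥ 5/2 |X|` for every
nonempty `X ⊆ A`. Applied to all the level sets of the fibre sizes `|B i|`, it yields
`|B~ + B~| ≥ 5/2 |B~|`.

Kneser's theorem itself comes from Dyson transforms, which cover `A + B` by periodic sets `C` with
`|C| + |stab C| ≥ |A| + |B|`; this lower bound survives unions.
-/

open Finset

section Kneser

variable {G : Type*} [AddCommGroup G] [DecidableEq G] {A B C C₁ C₂ : Finset G} {b c g : G}

/-- The group of periods `{g | g + C = C}` of a finite set `C`, as a finset. Cutting it out of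
`C - C` keeps it finite; the price is that `addStab ∅ = ∅`, whereas the stabilizer of `∅` is all
of `G`. -/
def addStab (C : Finset G) : Finset G := {g ∈ C - C | g +ᵥ C = C}

lemma mem_addStab (hC : C.Nonempty) : g ∈ addStab C ↔ g ∈ AddAction.stabilizer G C := by
  refine ⟨fun hg ↦ (mem_filter.1 hg).2, fun hg ↦ mem_filter.2 ⟨?_, hg⟩⟩
  obtain ⟨c, hc⟩ := hC
  exact mem_sub.2
    ⟨g + c, AddAction.mem_stabilizer_finset'.1 hg hc, c, hc, add_sub_cancel_right g c⟩

lemma mem_addStab_iff_forall_add_mem (hC : C.Nonempty) :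
    g ∈ addStab C ↔ ∀ c ∈ C, c + g ∈ C := by
  simp only [mem_addStab hC, AddAction.mem_stabilizer_finset', vadd_eq_add, add_comm g]

lemma add_mem_iff_of_mem_addStab (hg : g ∈ addStab C) : c + g ∈ C ↔ c ∈ C := by
  rw [add_comm]
  exact AddAction.mem_stabilizer_finset.1 (mem_filter.1 hg).2 c

lemma zero_mem_addStab (hC : C.Nonempty) : 0 ∈ addStab C :=
  (mem_addStab hC).2 (zero_mem _)

lemma add_addStab (C : Finset G) : C + addStab C = C := by
  rcases C.eq_empty_or_nonempty with rfl | hC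
  · exact empty_add _
  · refine Subset.antisymm (add_subset_iff.2 fun c hc g hg ↦ ?_)
      (subset_add_left C (zero_mem_addStab hC))
    exact (add_mem_iff_of_mem_addStab hg).2 hc

lemma addStab_add_addStab (C : Finset G) : addStab C + addStab C = addStab C := by
  rcases C.eq_empty_or_nonempty with rfl | hC
  · rfl
  · refine Subset.antisymm (add_subset_iff.2 fun g hg h hh ↦ ?_)
      (subset_add_left _ (zero_mem_addStab hC))
    rw [mem_addStab hC] at *
    exact add_mem hg hh

lemma addStab_sub_addStab_subset (C : Finset G) : addStab C - addStab C ⊆ addStab C := by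
  rcases C.eq_empty_or_nonempty with rfl | hC
  · rfl
  · refine sub_subset_iff.2 fun g hg h hh ↦ ?_
    rw [mem_addStab hC] at *
    exact sub_mem hg hh

lemma addStab_inter_addStab_subset (C₁ C₂ : Finset G) :
    addStab C₁ ∩ addStab C₂ ⊆ addStab (C₁ ∪ C₂) := by
  intro g hg
  obtain ⟨⟨hgC, h₁⟩, -, h₂⟩ := (mem_inter.1 hg).imp mem_filter.1 mem_filter.1
  refine mem_filter.2 ⟨sub_subset_sub subset_union_left subset_union_left hgC, ?_⟩
  rw [vadd_finset_union, h₁, h₂]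

lemma card_mul_card_le_card_inter_sub_mul_card_add (S T : Finset G) :
    #S * #T ≤ #((S - S) ∩ (T - T)) * #(S + T) := by
  rw [← card_product, ← image_add_product]
  refine card_le_mul_card_image _ _ fun z hz ↦ ?_
  obtain ⟨⟨x, y⟩, hxy, rfl⟩ := mem_image.1 hz
  rw [mem_product] at hxy
  refine card_le_card_of_injOn (fun p ↦ p.1 - x) (fun p hp ↦ ?_) fun p hp q hq hpq ↦ ?_
  · obtain ⟨hpST, hp⟩ := mem_filter.1 hp
    rw [mem_product] at hpST
    have hdiff : p.1 - x = y - p.2 := sub_eq_sub_iff_add_eq_add.2 (hp.trans (add_comm x y))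
    exact mem_inter.2
      ⟨sub_mem_sub hpST.1 hxy.1, mem_sub.2 ⟨y, hxy.2, p.2, hpST.2, hdiff.symm⟩⟩
  · have hfst : p.1 = q.1 := sub_left_injective hpq
    have hsum : p.1 + p.2 = q.1 + q.2 := (mem_filter.1 hp).2.trans (mem_filter.1 hq).2.symm
    exact Prod.ext hfst (add_left_cancel (hfst ▸ hsum))

lemma card_filter_notMem_mul_card_filter_mem_le (C₁ C₂ : Finset G) (d : G) :
    #{x ∈ addStab C₁ | d + x ∉ C₂} * #{y ∈ addStab C₂ | d + y ∈ C₁} ≤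
      #(addStab C₁ ∩ addStab C₂) * #(C₁ \ C₂) := by
  set S := {x ∈ addStab C₁ | d + x ∉ C₂}
  set T := {y ∈ addStab C₂ | d + y ∈ C₁}
  have hsub : (S - S) ∩ (T - T) ⊆ addStab C₁ ∩ addStab C₂ := inter_subset_inter
    ((sub_subset_sub (filter_subset _ _) (filter_subset _ _)).trans (addStab_sub_addStab_subset C₁))
    ((sub_subset_sub (filter_subset _ _) (filter_subset _ _)).trans (addStab_sub_addStab_subset C₂))
  have hgrid : d +ᵥ (S + T) ⊆ C₁ \ C₂ := by
    rintro _ hz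
    obtain ⟨_, hxy, rfl⟩ := mem_vadd_finset.1 hz
    obtain ⟨x, hx, y, hy, rfl⟩ := mem_add.1 hxy
    obtain ⟨hx₁, hx₂⟩ := mem_filter.1 hx
    obtain ⟨hy₂, hy₁⟩ := mem_filter.1 hy
    refine mem_sdiff.2 ⟨?_, ?_⟩
    · rwa [vadd_eq_add, add_comm x, ← add_assoc, add_mem_iff_of_mem_addStab hx₁]
    · rwa [vadd_eq_add, ← add_assoc, add_mem_iff_of_mem_addStab hy₂]
  calc #S * #T ≤ #((S - S) ∩ (T - T)) * #(S + T) :=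
        card_mul_card_le_card_inter_sub_mul_card_add S T
    _ ≤ #(addStab C₁ ∩ addStab C₂) * #(C₁ \ C₂) :=
        Nat.mul_le_mul (card_le_card hsub) ((card_vadd_finset d _).ge.trans (card_le_card hgrid))

lemma card_addStab_inter_addStab_le_card_filter {p : G → Prop} [DecidablePred p] {x : G}
    (hp : ∀ y, ∀ k ∈ addStab C₂, p y → p (y + k)) (hx : x ∈ addStab C₁) (hpx : p x) :
    #(addStab C₁ ∩ addStab C₂) ≤ #{y ∈ addStab C₁ | p y} := by
  rw [← card_vadd_finset x]
  refine card_le_card fun _ hy ↦ ?_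
  obtain ⟨k, hk, rfl⟩ := mem_vadd_finset.1 hy
  obtain ⟨hk₁, hk₂⟩ := mem_inter.1 hk
  exact mem_filter.2 ⟨addStab_add_addStab C₁ ▸ add_mem_add hx hk₁, hp x k hk₂ hpx⟩

lemma card_addStab_lt_card_addStab_of_not_subset (hC₂ : C₂.Nonempty) (hC : ¬ C₁ ⊆ C₂)
    (h₁ : #(C₂ \ C₁) + #(addStab C₁ ∩ addStab C₂) < #(addStab C₁))
    (h₂ : #(C₁ \ C₂) + #(addStab C₁ ∩ addStab C₂) < #(addStab C₂)) :
    #(addStab C₁) < #(addStab C₂) := by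
  obtain ⟨d, hd₁, hd₂⟩ := not_subset.1 hC
  have h0₁ : 0 ∈ addStab C₁ := zero_mem_addStab ⟨d, hd₁⟩
  have h0₂ : 0 ∈ addStab C₂ := zero_mem_addStab hC₂
  have hpos : 0 < #(addStab C₁ ∩ addStab C₂) := card_pos.2 ⟨0, mem_inter.2 ⟨h0₁, h0₂⟩⟩
  have hS : #(addStab C₁ ∩ addStab C₂) ≤ #{x ∈ addStab C₁ | d + x ∉ C₂} :=
    card_addStab_inter_addStab_le_card_filter
      (fun y k hk ↦ by rw [← add_assoc, add_mem_iff_of_mem_addStab hk]; exact id) h0₁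
      (by rwa [add_zero])
  have hT : #(addStab C₁ ∩ addStab C₂) ≤ #{y ∈ addStab C₂ | d + y ∈ C₁} := by
    rw [inter_comm]
    exact card_addStab_inter_addStab_le_card_filter
      (fun y k hk ↦ by rw [← add_assoc, add_mem_iff_of_mem_addStab hk]; exact id) h0₂
      (by rwa [add_zero])
  have hS_compl (x) (hx : x ∈ addStab C₁) (hdx : d + x ∈ C₂) :
      #(addStab C₁ ∩ addStab C₂) ≤ #{x ∈ addStab C₁ | d + x ∈ C₂} :=
    card_addStab_inter_addStab_le_card_filter
      (fun y k hk ↦ by rw [← add_assoc, add_mem_iff_of_mem_addStab hk]; exact id) hx hdx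
  have hST := card_filter_notMem_mul_card_filter_mem_le C₁ C₂ d
  have hST_swap := card_filter_notMem_mul_card_filter_mem_le C₂ C₁ d
  have hsplit₁ := card_filter_add_card_filter_not (s := addStab C₁) (fun x ↦ d + x ∈ C₂)
  have hsplit₂ := card_filter_add_card_filter_not (s := addStab C₂) (fun y ↦ d + y ∈ C₁)
  rw [inter_comm] at hST_swap
  -- Let `r = #(addStab C₁ ∩ addStab C₂)`. If `p, q ≥ r` then `p * q ≥ r * (p + q - r)`, so when all
  -- four parts have at least `r` elements, `hST` and `hST_swap` give `hlt` and its reverse.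
  rcases eq_empty_or_nonempty {x ∈ addStab C₁ | d + x ∈ C₂} with he | ⟨x, hx⟩
  · rw [he, card_empty, zero_add] at hsplit₁
    rw [hsplit₁] at hST
    nlinarith
  · exfalso
    have := hS_compl x (mem_filter.1 hx).1 (mem_filter.1 hx).2
    have hlt : #{x ∈ addStab C₁ | d + x ∉ C₂} < #{y ∈ addStab C₂ | d + y ∉ C₁} := by
      by_contra! hle
      nlinarith
    nlinarith

lemma min_card_add_card_addStab_le_card_union (C₁ C₂ : Finset G) :
    min (#C₁ + #(addStab C₁)) (#C₂ + #(addStab C₂)) ≤ #(C₁ ∪ C₂) + #(addStab (C₁ ∪ C₂)) := by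
  by_cases h₁₂ : C₁ ⊆ C₂
  · rw [union_eq_right.2 h₁₂]
    exact min_le_right _ _
  by_cases h₂₁ : C₂ ⊆ C₁
  · rw [union_eq_left.2 h₂₁]
    exact min_le_left _ _
  have hne₁ : C₁.Nonempty := (not_subset.1 h₁₂).imp fun _ h ↦ h.1
  have hne₂ : C₂.Nonempty := (not_subset.1 h₂₁).imp fun _ h ↦ h.1
  have hlt₁ := card_addStab_lt_card_addStab_of_not_subset hne₂ h₁₂
  have hlt₂ := card_addStab_lt_card_addStab_of_not_subset hne₁ h₂₁
  have hstab := card_le_card (addStab_inter_addStab_subset C₁ C₂)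
  have hcard₁ := card_sdiff_add_card C₁ C₂
  have hcard₂ := card_sdiff_add_card C₂ C₁
  rw [inter_comm] at hlt₂
  rw [union_comm] at hcard₂
  omega

lemma exists_card_add_card_le_card_add_card_addStab (hA : A.Nonempty) (hb : b ∈ B) :
    ∃ C, b +ᵥ A ⊆ C ∧ C ⊆ A + B ∧ #A + #B ≤ #C + #(addStab C) := by
  induction B using Finset.strongInduction generalizing A with
  | H B ih =>
  by_cases hAB : ∀ a ∈ A, ∀ x ∈ B, x - b + a ∈ A
  · refine ⟨b +ᵥ A, subset_rfl, ?_, ?_⟩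
    · rw [add_comm]
      exact vadd_finset_subset_add hb
    · have hBstab : -b +ᵥ B ⊆ addStab (b +ᵥ A) := by
        intro _ hy
        obtain ⟨x, hx, rfl⟩ := mem_vadd_finset.1 hy
        refine (mem_addStab hA.vadd_finset).2 (AddAction.mem_stabilizer_finset'.2 fun c hc ↦ ?_)
        obtain ⟨a, ha, rfl⟩ := mem_vadd_finset.1 hc
        rw [vadd_comm, vadd_eq_add (-b), neg_add_eq_sub]
        exact vadd_mem_vadd_finset (hAB a ha x hx)
      rw [card_vadd_finset, ← card_vadd_finset (-b) B]
      exact Nat.add_le_add_left (card_le_card hBstab) _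
  · push Not at hAB
    obtain ⟨a, ha, x, hx, hax⟩ := hAB
    have hmem (y : G) : y ∈ B ∩ (-(a - b) +ᵥ A) ↔ y ∈ B ∧ y - b + a ∈ A := by
      rw [mem_inter, mem_neg_vadd_finset_iff, vadd_eq_add, sub_add_comm]
    obtain ⟨C, hAC, hCAB, hcard⟩ := ih (addDysonETransform (a - b) (A, B)).2
      (ssubset_iff_subset_not_subset.2
        ⟨inter_subset_left, fun h ↦ hax ((hmem x).1 (h hx)).2⟩)
      (A := (addDysonETransform (a - b) (A, B)).1) (hA.mono subset_union_left)
      ((hmem b).2 ⟨hb, by rwa [sub_self, zero_add]⟩)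
    exact ⟨C, (vadd_finset_subset_vadd_finset subset_union_left).trans hAC,
      hCAB.trans (addDysonETransform.subset _ _), (addDysonETransform.card _ _).ge.trans hcard⟩

lemma card_add_card_le_card_add_add_card_addStab (hA : A.Nonempty) (hB : B.Nonempty) :
    #A + #B ≤ #(A + B) + #(addStab (A + B)) := by
  have hcover (c : G) (hc : c ∈ A + B) :
      ∃ C, c ∈ C ∧ C ⊆ A + B ∧ #A + #B ≤ #C + #(addStab C) := by
    obtain ⟨a, ha, b, hb, rfl⟩ := mem_add.1 hc
    obtain ⟨C, hAC, hCAB, hcard⟩ := exists_card_add_card_le_card_add_card_addStab hA hb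
    exact ⟨C, hAC (add_comm a b ▸ vadd_mem_vadd_finset ha), hCAB, hcard⟩
  choose! f hmem hsub hcard using hcover
  have hAB : A + B = (A + B).sup' (hA.add hB) f :=
    le_antisymm (fun c hc ↦ le_sup' f hc (hmem c hc)) (sup'_le _ _ hsub)
  rw [hAB]
  exact sup'_induction _ _ (p := fun C ↦ #A + #B ≤ #C + #(addStab C))
    (fun C₁ h₁ C₂ h₂ ↦ (le_min h₁ h₂).trans (min_card_add_card_addStab_le_card_union C₁ C₂)) hcard

theorem kneser (hA : A.Nonempty) (hB : B.Nonempty) :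
    #(A + addStab (A + B)) + #(B + addStab (A + B)) ≤ #(A + B) + #(addStab (A + B)) := by
  have hsum : (A + addStab (A + B)) + (B + addStab (A + B)) = A + B := by
    rw [add_add_add_comm, addStab_add_addStab, add_addStab]
  simpa only [hsum] using card_add_card_le_card_add_add_card_addStab
    (hA.add ⟨0, zero_mem_addStab (hA.add hB)⟩) (hB.add ⟨0, zero_mem_addStab (hA.add hB)⟩)

end Kneser

section ZeroFibre

variable {M G : Type*} [LinearOrder M] [AddCommMonoid M] [IsCancelAdd M] [AddLeftMono M]
  [AddRightMono M] [DecidableEq G] {A X : Finset M}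

lemma card_filter_add_card_filter_le_card_filter_add_one [Add G] (φ : AddHom M G) {U V : Finset G}
    (hA : {a ∈ A | φ a ∈ U}.Nonempty) (hX : {x ∈ X | φ x ∈ V}.Nonempty) :
    #{a ∈ A | φ a ∈ U} + #{x ∈ X | φ x ∈ V} ≤ #{z ∈ A + X | φ z ∈ U + V} + 1 := by
  refine Nat.sub_le_iff_le_add.1
    ((cauchy_davenport_add_of_linearOrder_isCancelAdd hA hX).trans (card_le_card ?_))
  refine add_subset_iff.2 fun a ha x hx ↦ ?_
  rw [mem_filter] at *
  exact ⟨add_mem_add ha.1 hx.1, map_add φ a x ▸ add_mem_add ha.2 hx.2⟩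

lemma card_add_card_filter_le_card_filter_add [AddMonoid G] (φ : M →+ G) {l : M} (hl : l ≠ 0)
    (hφl : φ l = 0) (h0A : 0 ∈ A) (hlA : l ∈ A) {D : Finset G}
    (hD : D ⊆ A.image φ + X.image φ) :
    #D + #{x ∈ X | φ x ∈ D} ≤ #{z ∈ A + X | φ z ∈ D} := by
  rw [← sum_card_fiberwise_eq_card_filter, ← sum_card_fiberwise_eq_card_filter,
    card_eq_sum_ones, ← sum_add_distrib]
  refine sum_le_sum fun c hc ↦ ?_
  rcases {x ∈ X | φ x = c}.eq_empty_or_nonempty with hX | hX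
  · rw [hX, card_empty, add_zero, Nat.one_le_iff_ne_zero, ← Nat.pos_iff_ne_zero, card_pos]
    rw [← image_add] at hD
    obtain ⟨z, hz, rfl⟩ := mem_image.1 (hD hc)
    exact ⟨z, mem_filter.2 ⟨hz, rfl⟩⟩
  · have hsub : {0, l} + {x ∈ X | φ x = c} ⊆ {z ∈ A + X | φ z = c} := by
      refine add_subset_iff.2 fun a ha x hx ↦ ?_
      obtain ⟨hxX, rfl⟩ := mem_filter.1 hx
      rw [mem_insert, mem_singleton] at ha
      rcases ha with rfl | rfl
      · exact mem_filter.2 ⟨add_mem_add h0A hxX, by rw [zero_add]⟩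
      · exact mem_filter.2 ⟨add_mem_add hlA hxX, by rw [map_add, hφl, zero_add]⟩
    calc 1 + #{x ∈ X | φ x = c} = #{0, l} + #{x ∈ X | φ x = c} - 1 := by
          rw [card_pair hl.symm]; omega
      _ ≤ #({0, l} + {x ∈ X | φ x = c}) :=
          cauchy_davenport_add_of_linearOrder_isCancelAdd (insert_nonempty _ _) hX
      _ ≤ #{z ∈ A + X | φ z = c} := card_le_card hsub

end ZeroFibre

section Coset

variable {M G : Type*} [AddCommGroup G] [DecidableEq G]

lemma card_add_card_le_card_add_add_card_inter_vadd {S E : Finset G} (h0 : 0 ∈ E) {u : G}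
    (hu : u ∈ S) : #S + #E ≤ #(S + E) + #(S ∩ (u +ᵥ E)) := by
  rw [← card_vadd_finset u E, ← card_union_add_card_inter]
  exact Nat.add_le_add_right
    (card_le_card (union_subset (subset_add_left S h0) (vadd_finset_subset_add hu))) _

lemma card_image_add_card_le_card_image_add_add_card_filter {A : Finset M} (φ : M → G)
    {E : Finset G} (h0 : 0 ∈ E) {a : M} (ha : a ∈ A) :
    #(A.image φ) + #E ≤ #(A.image φ + E) + #{x ∈ A | φ x ∈ φ a +ᵥ E} := by
  refine (card_add_card_le_card_add_add_card_inter_vadd h0 (mem_image_of_mem φ ha)).trans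
    (Nat.add_le_add_left ?_ _)
  rw [← filter_mem_eq_inter, filter_image]
  exact card_image_le

lemma exists_mem_add_notMem_add_addStab {S T : Finset G} (hST : (S + T).Nonempty)
    (hS : ¬ S ⊆ addStab (S + T)) : ∃ c ∈ S + T, c ∉ T + addStab (S + T) := by
  by_contra! hsub
  refine hS fun s hs ↦ (mem_addStab_iff_forall_add_mem hST).2 fun c hc ↦ ?_
  rw [add_comm c, ← add_addStab (S + T), add_assoc S]
  exact add_mem_add hs (hsub c hc)

lemma notMem_vadd_addStab {C T : Finset G} {c t : G} (hc : c ∉ T + addStab C) (ht : t ∈ T) :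
    t ∉ c +ᵥ addStab C := by
  intro htc
  obtain ⟨g, hg, rfl⟩ := mem_vadd_finset.1 htc
  have hneg : -g ∈ addStab C := by
    have hC : C.Nonempty := nonempty_iff_ne_empty.2 (by rintro rfl; exact notMem_empty g hg)
    rw [mem_addStab hC] at *
    exact neg_mem hg
  exact hc (mem_add.2 ⟨c + g, ht, -g, hneg, add_neg_cancel_right c g⟩)

lemma eq_univ_of_image_subset_addStab [AddGroup M] [Fintype G] {C : Finset G} {A : Finset M}
    {φ : M →+ G} (hφ : Function.Surjective φ) (hgen : AddSubgroup.closure (A : Set M) = ⊤)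
    (hC : C.Nonempty) (hAC : A.image φ ⊆ addStab C) : C = univ := by
  have hstab : AddSubgroup.closure (A : Set M) ≤ (AddAction.stabilizer G C).comap φ :=
    (AddSubgroup.closure_le _).2 fun a ha ↦ (mem_addStab hC).1 (hAC (mem_image_of_mem φ ha))
  obtain ⟨c, hc⟩ := hC
  refine eq_univ_of_forall fun z ↦ ?_
  obtain ⟨m, hm⟩ := hφ (z - c)
  have hzc : z - c ∈ AddAction.stabilizer G C := hm ▸ hstab (hgen ▸ AddSubgroup.mem_top m)
  simpa using AddAction.mem_stabilizer_finset'.1 hzc hc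

end Coset

section Lev

variable {M G : Type*} [LinearOrder M] [AddCommMonoid M] [IsCancelAdd M] [AddLeftMono M]
  [AddRightMono M] [AddCommGroup G] [DecidableEq G] {A X : Finset M}

lemma card_image_add_card_image_add_two_mul_card_le (φ : M →+ G) {E : Finset G} (h0 : 0 ∈ E)
    {a x : M} (ha : a ∈ A) (hx : x ∈ X) :
    #(A.image φ) + #(X.image φ) + 2 * #E ≤ #(A.image φ + E) + #(X.image φ + E) +
      #{z ∈ A + X | φ z ∈ (φ a +ᵥ E) + (φ x +ᵥ E)} + 1 := by
  have hself (g : G) : g ∈ g +ᵥ E := mem_vadd_finset.2 ⟨0, h0, add_zero g⟩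
  have hfibre : #{y ∈ A | φ y ∈ φ a +ᵥ E} + #{y ∈ X | φ y ∈ φ x +ᵥ E} ≤
      #{z ∈ A + X | φ z ∈ (φ a +ᵥ E) + (φ x +ᵥ E)} + 1 :=
    card_filter_add_card_filter_le_card_filter_add_one (φ : AddHom M G)
      ⟨a, mem_filter.2 ⟨ha, hself (φ a)⟩⟩ ⟨x, mem_filter.2 ⟨hx, hself (φ x)⟩⟩
  have hholeA := card_image_add_card_le_card_image_add_add_card_filter φ h0 ha
  have hholeX := card_image_add_card_le_card_image_add_add_card_filter φ h0 hx
  omega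

lemma card_image_add_card_image_add_card_le (φ : M →+ G) {l : M} (hl : l ≠ 0) (hφl : φ l = 0)
    (h0A : 0 ∈ A) (hlA : l ∈ A) (hX : X.Nonempty)
    (hA : ¬ A.image φ ⊆ addStab (A.image φ + X.image φ)) :
    #(A.image φ) + #(X.image φ) + #X ≤ #(A + X) + 1 := by
  have hφA : (A.image φ).Nonempty := ⟨φ 0, mem_image_of_mem φ h0A⟩
  have hkneser := kneser hφA (hX.image φ)
  obtain ⟨c, hc, hcX⟩ := exists_mem_add_notMem_add_addStab (hφA.add (hX.image φ)) hA
  set C := A.image φ + X.image φ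
  have hCne : C.Nonempty := ⟨c, hc⟩
  obtain ⟨_, ha', _, hx', rfl⟩ := mem_add.1 hc
  obtain ⟨a, ha, rfl⟩ := mem_image.1 ha'
  obtain ⟨x, hx, rfl⟩ := mem_image.1 hx'
  have h0 : 0 ∈ addStab C := zero_mem_addStab hCne
  -- `X` has no point over the coset `K`: outside `K` every fibre of `A + X` beats that of `X` by
  -- one, while over `K` the sumset is bounded below by Cauchy–Davenport in `M`.
  set K := (φ a + φ x) +ᵥ addStab C
  have hKC : K ⊆ C := (vadd_finset_subset_add hc).trans (add_addStab C).subset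
  have hXK : {y ∈ X | φ y ∈ C \ K} = X := by
    refine filter_true_of_mem fun y hy ↦
      mem_sdiff.2 ⟨?_, notMem_vadd_addStab hcX (mem_image_of_mem φ hy)⟩
    exact subset_add_right _ (map_zero φ ▸ mem_image_of_mem φ h0A) (mem_image_of_mem φ hy)
  have hout : #(C \ K) + #X ≤ #{z ∈ A + X | φ z ∉ K} := by
    have hfibre := card_add_card_filter_le_card_filter_add φ hl hφl h0A hlA
      (sdiff_subset : C \ K ⊆ C)
    rw [hXK] at hfibre
    exact hfibre.trans
      (card_le_card (monotone_filter_right _ fun z _ hz ↦ (mem_sdiff.1 hz).2))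
  have hcoset : (φ a +ᵥ addStab C) + (φ x +ᵥ addStab C) = K := by
    rw [vadd_add_vadd_comm, addStab_add_addStab]
  have hin := card_image_add_card_image_add_two_mul_card_le φ h0 ha hx
  rw [hcoset] at hin
  have hsplit := card_filter_add_card_filter_not (s := A + X) (fun z ↦ φ z ∈ K)
  have hCK : #(C \ K) + #(addStab C) = #C := by
    rw [← card_sdiff_add_card_eq_card hKC, card_vadd_finset]
  omega

end Lev

lemma card_le_card_image_intCast_add_one {l : ℕ} {Y : Finset ℤ} (hY : Y ⊆ Icc 0 (l : ℤ)) :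
    #Y ≤ #(Y.image (Int.castAddHom (ZMod l))) + 1 := by
  have hinj : Set.InjOn (Int.castAddHom (ZMod l)) (Y.erase l : Finset ℤ) := by
    intro x hx y hy hxy
    rw [mem_coe, mem_erase] at hx hy
    have := mem_Icc.1 (hY hx.2)
    have := mem_Icc.1 (hY hy.2)
    rw [Int.coe_castAddHom, ZMod.intCast_eq_intCast_iff'] at hxy
    rwa [Int.emod_eq_of_lt (by omega) (by omega), Int.emod_eq_of_lt (by omega) (by omega)] at hxy
  calc #Y ≤ #(Y.erase l) + 1 := Nat.sub_le_iff_le_add.1 pred_card_le_card_erase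
    _ = #((Y.erase l).image (Int.castAddHom (ZMod l))) + 1 := by rw [card_image_of_injOn hinj]
    _ ≤ #(Y.image (Int.castAddHom (ZMod l))) + 1 :=
        Nat.add_le_add_right (card_le_card (image_subset_image (erase_subset _ _))) 1

theorem min_le_card_add_of_subset_Icc {l : ℕ} {A X : Finset ℤ} (hA : A ⊆ Icc 0 (l : ℤ))
    (hX : X ⊆ Icc 0 (l : ℤ)) (h0A : 0 ∈ A) (hlA : (l : ℤ) ∈ A) (hXne : X.Nonempty)
    (hgen : AddSubgroup.closure (A : Set ℤ) = ⊤) :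
    min (l + #X) (#A + 2 * #X - 3) ≤ #(A + X) := by
  rcases l.eq_zero_or_pos with rfl | hl
  · rw [zero_add]
    exact (min_le_left _ _).trans (card_le_card_add_left ⟨0, h0A⟩)
  have : NeZero l := ⟨hl.ne'⟩
  set φ := Int.castAddHom (ZMod l)
  have hl0 : (l : ℤ) ≠ 0 := by omega
  have hφl : φ (l : ℤ) = 0 := by simp [φ]
  set C := A.image φ + X.image φ
  have hCne : C.Nonempty := .add ⟨_, mem_image_of_mem φ h0A⟩ (hXne.image φ)
  by_cases hAC : A.image φ ⊆ addStab C
  · have hCuniv : C = univ := 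
      eq_univ_of_image_subset_addStab ZMod.intCast_surjective hgen hCne hAC
    have hfibre := card_add_card_filter_le_card_filter_add φ hl0 hφl h0A hlA (D := univ) hCuniv.ge
    simp only [mem_univ, filter_true, card_univ, ZMod.card] at hfibre
    exact (min_le_left _ _).trans hfibre
  · have hcard := card_image_add_card_image_add_card_le φ hl0 hφl h0A hlA hXne hAC
    have hcardA : #A ≤ #(A.image φ) + 1 := card_le_card_image_intCast_add_one hA
    have hcardX : #X ≤ #(X.image φ) + 1 := card_le_card_image_intCast_add_one hX
    omega

section Generation

variable {G : Type*}

lemma closure_le_closure_vadd [AddGroup G] {A : Set G} (h0 : 0 ∈ A) (x : G) :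
    AddSubgroup.closure A ≤ AddSubgroup.closure (x +ᵥ A) := by
  have hmem {a : G} (ha : a ∈ A) : x + a ∈ AddSubgroup.closure (x +ᵥ A) :=
    AddSubgroup.subset_closure (Set.vadd_mem_vadd_set ha)
  refine (AddSubgroup.closure_le _).2 fun a ha ↦ ?_
  simpa using add_mem (neg_mem (hmem h0)) (hmem ha)

lemma closure_image_eq_top_of_gcd_eq_one {ι : Type*} {I : Finset ι} {a : ι → ℤ}
    (hgcd : I.gcd a = 1) : AddSubgroup.closure (I.image a : Set ℤ) = ⊤ := by
  obtain ⟨g, hg⟩ := I.gcd_eq_sum_mul a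
  rw [hgcd] at hg
  rw [eq_top_iff, ← Int.zmultiples_one, AddSubgroup.zmultiples_le, hg]
  refine sum_mem fun i hi ↦ ?_
  rw [mul_comm, ← smul_eq_mul]
  exact zsmul_mem (AddSubgroup.subset_closure (mem_image_of_mem a hi)) _

end Generation

lemma five_mul_card_le_two_mul_card_add {A X : Finset ℤ} (h0 : 0 ∈ A)
    (hgen : AddSubgroup.closure (A : Set ℤ) = ⊤) (hcard : 6 ≤ #A) {m M : ℤ} (hm : m ∈ A)
    (hM : M ∈ A) (hlong : 3 * (#A : ℤ) ≤ 2 * (M - m)) (hX : X ⊆ A) :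
    5 * #X ≤ 2 * #(A + X) := by
  rcases X.eq_empty_or_nonempty with rfl | hXne
  · simp
  set u := A.min' ⟨0, h0⟩
  set v := A.max' ⟨0, h0⟩
  have hum : u ≤ m := A.min'_le m hm
  have hMv : M ≤ v := A.le_max' M hM
  obtain ⟨l, hl⟩ := Int.eq_ofNat_of_zero_le (show 0 ≤ v - u by omega)
  have hIcc : -u +ᵥ A ⊆ Icc 0 (l : ℤ) := by
    intro _ hz
    obtain ⟨y, hy, rfl⟩ := mem_vadd_finset.1 hz
    have := A.min'_le y hy
    have := A.le_max' y hy
    rw [vadd_eq_add, mem_Icc]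
    omega
  have hbound := min_le_card_add_of_subset_Icc (X := -u +ᵥ X) hIcc
    ((vadd_finset_subset_vadd_finset hX).trans hIcc)
    (mem_vadd_finset.2 ⟨u, A.min'_mem _, neg_add_cancel u⟩)
    (mem_vadd_finset.2 ⟨v, A.max'_mem _, by rw [vadd_eq_add, ← hl, neg_add_eq_sub]⟩)
    hXne.vadd_finset
    (by rw [coe_vadd_finset, eq_top_iff, ← hgen]; exact closure_le_closure_vadd h0 (-u))
  rw [vadd_add_vadd_comm, card_vadd_finset, card_vadd_finset, card_vadd_finset] at hbound
  have := card_le_card hX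
  omega

section Fibre

variable {M N : Type*} [Add M] [Add N] [DecidableEq M] [DecidableEq N] {c k : ℕ}

lemma mul_sum_le_mul_sum_of_forall_subset {A X : Finset M} {f g : M → ℕ}
    (hAX : ∀ Y ⊆ X, c * #Y ≤ k * #(A + Y)) (hfg : ∀ a ∈ A, ∀ x ∈ X, f x ≤ g (a + x)) :
    c * ∑ x ∈ X, f x ≤ k * ∑ z ∈ A + X, g z := by
  have hf (x) (hx : x ∈ X) : f x = #{t ∈ range (X.sup f) | t < f x} := by
    have : {t ∈ range (X.sup f) | t < f x} = range (f x) := by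
      ext t
      rw [mem_filter, mem_range, mem_range, and_iff_right_iff_imp]
      exact fun h ↦ h.trans_le (le_sup hx)
    rw [this, card_range]
  have hg (z) : #{t ∈ range (X.sup f) | t < g z} ≤ g z := by
    refine (card_le_card fun t ht ↦ ?_).trans (card_range (g z)).le
    exact mem_range.2 (mem_filter.1 ht).2
  have hlevel (t : ℕ) : A + {x ∈ X | t < f x} ⊆ {z ∈ A + X | t < g z} := by
    refine add_subset_iff.2 fun a ha x hx ↦ ?_
    rw [mem_filter] at *
    exact ⟨add_mem_add ha hx.1, hx.2.trans_le (hfg a ha x hx.1)⟩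
  calc c * ∑ x ∈ X, f x = ∑ t ∈ range (X.sup f), c * #{x ∈ X | t < f x} := by
        rw [sum_congr rfl hf, ← mul_sum]
        congr 1
        exact sum_card_bipartiteAbove_eq_sum_card_bipartiteBelow _
    _ ≤ ∑ t ∈ range (X.sup f), k * #{z ∈ A + X | t < g z} := sum_le_sum fun t _ ↦
        (hAX _ (filter_subset _ _)).trans (Nat.mul_le_mul_left k (card_le_card (hlevel t)))
    _ = k * ∑ z ∈ A + X, #{t ∈ range (X.sup f) | t < g z} := by
        rw [← mul_sum]
        congr 1
        exact (sum_card_bipartiteAbove_eq_sum_card_bipartiteBelow _).symm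
    _ ≤ k * ∑ z ∈ A + X, g z := Nat.mul_le_mul_left k (sum_le_sum fun z _ ↦ hg z)

lemma mul_card_le_mul_card_add_of_image [IsLeftCancelAdd M] (π : AddHom M N) {S T : Finset M}
    (h : ∀ Y ⊆ T.image π, c * #Y ≤ k * #(S.image π + Y)) : c * #T ≤ k * #(S + T) := by
  have hfibre (y) (hy : y ∈ S.image π) (z : N) :
      #{q ∈ T | π q = z} ≤ #{r ∈ S + T | π r = y + z} := by
    obtain ⟨p, hp, rfl⟩ := mem_image.1 hy
    refine card_le_card_of_injOn (p + ·) (fun q hq ↦ ?_) (add_right_injective p).injOn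
    obtain ⟨hqT, rfl⟩ := mem_filter.1 hq
    exact mem_filter.2 ⟨add_mem_add hp hqT, map_add π p q⟩
  rw [card_eq_sum_card_image π T, card_eq_sum_card_image π (S + T), image_add]
  exact mul_sum_le_mul_sum_of_forall_subset h fun y hy z _ ↦ hfibre y hy z

end Fibre

lemma image_fst_biUnion_singleton_product {ι α β : Type*} [DecidableEq α] [DecidableEq β]
    {I : Finset ι} (a : ι → α) {B : ι → Finset β} (hB : ∀ i ∈ I, (B i).Nonempty) :
    (I.biUnion fun i ↦ {a i} ×ˢ B i).image Prod.fst = I.image a := by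
  rw [biUnion_image, ← biUnion_singleton]
  exact biUnion_congr rfl fun i hi ↦ product_image_fst (hB i hi)

theorem max_bound_of_small_doubling_general {ι G : Type*} [Add G] [IsLeftCancelAdd G]
    [DecidableEq G] {I : Finset ι} (hI : 6 ≤ #I) {a : ι → ℤ} (hinj : Set.InjOn a I)
    (h0 : 0 ∈ I.image a) (hgcd : I.gcd a = 1) {B : ι → Finset G}
    (hB : ∀ i ∈ I, (B i).Nonempty) {S : Finset (ℤ × G)}
    (hS : S = I.biUnion fun i ↦ {a i} ×ˢ B i) (hdbl : 2 * #(S + S) < 5 * #S) :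
    ∀ i ∈ I, ∀ j ∈ I, 2 * (a i - a j) < 3 * (#I : ℤ) := by
  intro i hi j hj
  by_contra! hlong
  have hfst : S.image (AddHom.fst ℤ G) = I.image a :=
    hS ▸ image_fst_biUnion_singleton_product a hB
  rw [← card_image_of_injOn hinj] at hI hlong
  refine hdbl.not_ge (mul_card_le_mul_card_add_of_image (AddHom.fst ℤ G) fun Y hY ↦ ?_)
  rw [hfst] at hY ⊢
  exact five_mul_card_le_two_mul_card_add h0 (closure_image_eq_top_of_gcd_eq_one hgcd) hI
    (mem_image_of_mem a hj) (mem_image_of_mem a hi) hlong hY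

theorem max_bound_of_small_doubling (s d : ℕ) (hs : 6 ≤ s) (hd : 0 < d)
    (a : ℕ → ℤ) (ha0 : a 0 = 0)
    (hinj : ∀ i < s, ∀ j < s, a i = a j → i = j)
    (hgcd : (Finset.range s).gcd a = 1)
    (B : ℕ → Finset (ZMod d)) (hBne : ∀ i < s, (B i).Nonempty) (h0B : (0 : ZMod d) ∈ B 0)
    (Btil : Finset (ℤ × ZMod d))
    (hBtil : Btil = (Finset.range s).biUnion (fun i => {a i} ×ˢ B i))
    (hdbl : 2 * (Btil + Btil).card < 5 * Btil.card) :
    ∀ i < s, 2 * a i < 3 * (s : ℤ) := by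
  have h0s : 0 < s := by omega
  intro i hi
  simpa [ha0] using max_bound_of_small_doubling_general (by simpa using hs)
    (fun i hi j hj ↦ hinj i (by simpa using hi) j (by simpa using hj))
    (ha0 ▸ mem_image_of_mem a (mem_range.2 h0s)) hgcd
    (fun i hi ↦ hBne i (mem_range.1 hi)) hBtil hdbl i (mem_range.2 hi) 0 (mem_range.2 h0s)
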